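/- Let n agents have demands d_1, …, d_n > 0 and supply S > 0, and suppose there is a q-times bin packing with k bins: subsets B_1, …, B_k of {1,…,n} such that for each j the sum of d_i over i ∈ B_j is at most S, and every agent i belongs to at least q of the sets B_1, …, B_k. Then there exists a feasible allocation X_1, …, X_n of [0,T] with λ(X_i) ≥ (q/k)·T for every agent i. -/

import Mathlib

open MeasureTheory Set

open scoped Function

/-! Cut `[0, T]` into `k` consecutive slots of length `T / k` and serve exactly the agents of the
`j`-th bin during the `j`-th slot. At most one bin is served at any time, so the load never exceeds
the capacity, and an agent lying in `m` bins is connected for a total time of `m * (T / k)`. -/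

section ConnectionTime

variable {ι κ Ω M : Type*} {I : κ → Set Ω} {t : Ω} {j : κ}

/-- The times at which agent `i` is connected when the agents of the bin `B j` are served during
the slot `I j`. -/
def connectionTime (I : κ → Set Ω) (B : κ → Finset ι) (i : ι) : Set Ω :=
  ⋃ (j) (_ : i ∈ B j), I j

theorem mem_connectionTime {B : κ → Finset ι} {i : ι} :
    t ∈ connectionTime I B i ↔ ∃ j, i ∈ B j ∧ t ∈ I j := by
  simp only [connectionTime, mem_iUnion, exists_prop]

theorem connectionTime_subset {s : Set Ω} (hI : ∀ j, I j ⊆ s) (B : κ → Finset ι) (i : ι) :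
    connectionTime I B i ⊆ s :=
  iUnion₂_subset fun j _ => hI j

theorem mem_connectionTime_iff_mem_bin (hI : Pairwise (Disjoint on I)) (ht : t ∈ I j)
    (B : κ → Finset ι) (i : ι) : t ∈ connectionTime I B i ↔ i ∈ B j := by
  refine mem_connectionTime.trans ⟨?_, fun hi => ⟨j, hi, ht⟩⟩
  rintro ⟨j', hi, ht'⟩
  rwa [hI.eq (not_disjoint_iff.mpr ⟨t, ht, ht'⟩)]

section Load

variable [Fintype ι] [AddCommMonoid M]

theorem sum_indicator_connectionTime_of_mem (hI : Pairwise (Disjoint on I))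
    (ht : t ∈ I j) (B : κ → Finset ι) (d : ι → M) :
    ∑ i, (connectionTime I B i).indicator (fun _ => d i) t = ∑ i ∈ B j, d i := by
  classical
  simp only [indicator_apply, mem_connectionTime_iff_mem_bin hI ht, Finset.sum_ite_mem_eq]

theorem sum_indicator_connectionTime_of_forall_notMem (ht : ∀ j, t ∉ I j) (B : κ → Finset ι)
    (d : ι → M) : ∑ i, (connectionTime I B i).indicator (fun _ => d i) t = 0 :=
  Finset.sum_eq_zero fun _ _ => indicator_of_notMem
    (fun h => let ⟨j, _, hj⟩ := mem_connectionTime.mp h; ht j hj) _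

theorem sum_indicator_connectionTime_le [LE M] (hI : Pairwise (Disjoint on I))
    {B : κ → Finset ι} {d : ι → M} {S : M} (hS : 0 ≤ S) (hcap : ∀ j, ∑ i ∈ B j, d i ≤ S) (t : Ω) :
    ∑ i, (connectionTime I B i).indicator (fun _ => d i) t ≤ S := by
  by_cases ht : ∃ j, t ∈ I j
  · obtain ⟨j, hj⟩ := ht
    exact (sum_indicator_connectionTime_of_mem hI hj B d).trans_le (hcap j)
  · exact (sum_indicator_connectionTime_of_forall_notMem (not_exists.mp ht) B d).trans_le hS

end Load

section Measure

variable [MeasurableSpace Ω]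

theorem measurableSet_connectionTime [Countable κ] (hI : ∀ j, MeasurableSet (I j))
    (B : κ → Finset ι) (i : ι) : MeasurableSet (connectionTime I B i) :=
  .iUnion fun j => .iUnion fun _ => hI j

theorem measure_connectionTime [Fintype κ] [DecidableEq ι] (μ : Measure Ω)
    (hI : Pairwise (Disjoint on I)) (hIm : ∀ j, MeasurableSet (I j))
    (B : κ → Finset ι) (i : ι) :
    μ (connectionTime I B i) = ∑ j with i ∈ B j, μ (I j) := by
  rw [← measure_biUnion_finset (fun _ _ _ _ h => hI h) fun j _ => hIm j]
  simp only [connectionTime, Finset.mem_filter_univ]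

end Measure

end ConnectionTime

section TimeSlot

variable {T : ℝ} {k : ℕ}

/-- The `j`-th slot, counting from `0`, of the division of `[0, T]` into `k` slots of equal length.
Slots are half-open so that they are disjoint; hence the final instant `T` belongs to none. -/
def timeSlot (T : ℝ) (j : Fin k) : Set ℝ :=
  Ico ((j : ℕ) * (T / k)) ((j + 1 : ℕ) * (T / k))

theorem measurableSet_timeSlot (T : ℝ) (j : Fin k) : MeasurableSet (timeSlot T j) :=
  measurableSet_Ico

theorem volume_timeSlot (T : ℝ) (j : Fin k) :
    volume (timeSlot T j) = ENNReal.ofReal (T / k) := by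
  rw [timeSlot, Real.volume_Ico, Nat.cast_succ, add_one_mul, add_sub_cancel_left]

theorem pairwise_disjoint_timeSlot (hT : 0 ≤ T) :
    Pairwise (Disjoint on (timeSlot T : Fin k → Set ℝ)) := by
  have endpoints_mono : Monotone fun m : ℕ => m * (T / k) := Nat.mono_cast.mul_const (by positivity)
  exact endpoints_mono.pairwise_disjoint_on_Ico_succ.comp_of_injective Fin.val_injective

theorem timeSlot_subset_Icc (hT : 0 ≤ T) (j : Fin k) : timeSlot T j ⊆ Icc 0 T := by
  have hk : (k : ℝ) ≠ 0 := Nat.cast_ne_zero.mpr (Nat.ne_zero_of_lt j.isLt)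
  refine Ico_subset_Icc_self.trans (Icc_subset_Icc (by positivity) ?_)
  calc ((j + 1 : ℕ) : ℝ) * (T / k) ≤ k * (T / k) := by gcongr; exact j.isLt
    _ = T := mul_div_cancel₀ T hk

theorem volume_connectionTime_timeSlot {ι : Type*} [DecidableEq ι] (hT : 0 ≤ T)
    (B : Fin k → Finset ι) (i : ι) :
    volume (connectionTime (timeSlot T) B i) =
      ENNReal.ofReal ((Finset.univ.filter fun j => i ∈ B j).card / k * T) := by
  rw [measure_connectionTime volume (pairwise_disjoint_timeSlot hT) (measurableSet_timeSlot T)]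
  simp only [volume_timeSlot, Finset.sum_const]
  rw [← ENNReal.ofReal_nsmul, nsmul_eq_mul, div_mul_eq_mul_div, mul_div_assoc]

end TimeSlot

theorem q_times_bin_packing_allocation_general {ι M : Type*} [Fintype ι] [DecidableEq ι]
    [AddCommMonoid M] [LE M] {k : ℕ} {q : ι → ℕ} {d : ι → M} {S : M} {T : ℝ}
    (hS : 0 ≤ S) (hT : 0 ≤ T) (B : Fin k → Finset ι)
    (hcap : ∀ j, ∑ i ∈ B j, d i ≤ S)
    (hcov : ∀ i, q i ≤ (Finset.univ.filter fun j => i ∈ B j).card) :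
    ∃ X : ι → Set ℝ,
      (∀ i, MeasurableSet (X i)) ∧
      (∀ i, X i ⊆ Icc 0 T) ∧
      (∀ t ∈ Icc (0 : ℝ) T, ∑ i, (X i).indicator (fun _ => d i) t ≤ S) ∧
      (∀ i, ENNReal.ofReal ((q i : ℝ) / (k : ℝ) * T) ≤ volume (X i)) := by
  refine ⟨connectionTime (timeSlot T) B,
    measurableSet_connectionTime (measurableSet_timeSlot T) B,
    connectionTime_subset (timeSlot_subset_Icc hT) B,
    fun t _ => sum_indicator_connectionTime_le (pairwise_disjoint_timeSlot hT) hS hcap t,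
    fun i => ?_⟩
  rw [volume_connectionTime_timeSlot hT]
  gcongr
  exact hcov i

/-- A `q`-times bin packing with `k` bins of capacity `S` (each agent in at least `q` bins)
yields a feasible allocation connecting every agent at least a `q/k` fraction of the time. -/
theorem q_times_bin_packing_allocation
    (n k q : ℕ) (d : Fin n → ℝ) (S T : ℝ)
    (hd : ∀ i, 0 < d i) (hS : 0 < S) (hT : 0 < T)
    (B : Fin k → Finset (Fin n))
    (hcap : ∀ j, ∑ i ∈ B j, d i ≤ S)
    (hcov : ∀ i, q ≤ (Finset.univ.filter fun j => i ∈ B j).card) :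
    ∃ X : Fin n → Set ℝ,
      (∀ i, MeasurableSet (X i)) ∧
      (∀ i, X i ⊆ Set.Icc 0 T) ∧
      (∀ t ∈ Set.Icc (0 : ℝ) T, ∑ i, (X i).indicator (fun _ => d i) t ≤ S) ∧
      (∀ i, ENNReal.ofReal ((q : ℝ) / (k : ℝ) * T) ≤ volume (X i)) :=
  q_times_bin_packing_allocation_general hS.le hT.le B hcap hcov
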